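/- Let q ≥ 1 and let T be a (q+1)-regular tree: a simple graph on a vertex set V that is connected and acyclic, in which every vertex has exactly q + 1 neighbors. Let A be an abelian group. Let F₀(E, A) be the group of functions f from ordered darts (v,w) (with v adjacent to w) to A satisfying f(w,v) = −f(v,w), and let F(V, A) be the group of all functions V → A. Then the map h : F₀(E, A) → F(V, A) defined by h(f)(v) = Σ_{w adjacent to v} f(v,w) is surjective. Consequently the sequence 0 → HC(A) → F₀(E, A) → F(V, A) → 0 is exact, where HC(A) = ker h is the group of A-valued harmonic cocycles. -/

import Mathlib

open SimpleGraph

/-- The group `F₀(E, A)` of `A`-valued functions on the darts (ordered edges) of a graph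
`G` that are odd under orientation reversal: `f(w,v) = -f(v,w)`. -/
def oddDartFunctions {V : Type*} (G : SimpleGraph V) (A : Type*) [AddCommGroup A] :
    AddSubgroup (G.Dart → A) where
  carrier := {f | ∀ d : G.Dart, f d.symm = - f d}
  add_mem' := by
    intro a b ha hb d
    simp only [Pi.add_apply, ha d, hb d]
    abel
  zero_mem' := by intro d; simp
  neg_mem' := by
    intro a ha d
    simp [Pi.neg_apply, ha d]

/-- The map `h : F₀(E, A) → F(V, A)`, `h(f)(v) = ∑_{w ~ v} f(v, w)`. -/
noncomputable def dartSum {V : Type*} (G : SimpleGraph V) [DecidableRel G.Adj]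
    [G.LocallyFinite] (A : Type*) [AddCommGroup A] :
    oddDartFunctions G A →+ (V → A) where
  toFun f := fun v => ∑ w ∈ (G.neighborFinset v).attach,
    (f : G.Dart → A) ⟨(v, (w : V)), by
      have h := w.2
      rw [SimpleGraph.mem_neighborFinset] at h
      exact h⟩
  map_zero' := by
    funext v
    simp
  map_add' := by
    intro a b
    funext v
    simp [Finset.sum_add_distrib]

/-!
Push the charge `g v` sitting at each vertex `v` off to infinity: choose for every `v` a neighbour
`c v` farther from a fixed root of its component, which exists because at most one neighbour of a
vertex in a forest is closer to the root. Let `y v` be the total charge that leaves `v`, namely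
`g v` plus everything received from the vertices `w` with `c w = v`. Distances to the root increase
along `c`, so this recursion is well founded, and the net flow has divergence `g`.
-/

section

variable {V A : Type*} [AddCommGroup A] {G : SimpleGraph V}

variable (G) in
/-- The net flow of a transport plan `φ`, where `φ v w` is the amount sent from `v` to `w`;
the values of `φ` at non-adjacent pairs are ignored. -/
def netFlow (φ : V → V → A) : oddDartFunctions G A :=
  ⟨fun d ↦ φ d.fst d.snd - φ d.snd d.fst, fun _ ↦ (neg_sub _ _).symm⟩

theorem dartSum_netFlow [DecidableRel G.Adj] [G.LocallyFinite] (φ : V → V → A) (v : V) :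
    dartSum G A (netFlow G φ) v =
      ∑ w ∈ G.neighborFinset v, φ v w - ∑ w ∈ G.neighborFinset v, φ w v :=
  (Finset.sum_attach _ fun w ↦ φ v w - φ w v).trans (Finset.sum_sub_distrib _ _)

section Outflow

variable [DecidableEq V] [G.LocallyFinite] {c : V → V}

variable (G) in
/-- The total charge leaving each vertex when every vertex `v`, starting with charge `g v`, passes
on all it has and all it receives to `c v`. Only charge arriving from neighbours is counted. -/
noncomputable def outflow (hc : WellFounded fun w v ↦ c w = v) (g : V → A) : V → A :=
  hc.fix fun v out ↦
    g v + ∑ w ∈ {w ∈ G.neighborFinset v | c w = v}.attach, out w (Finset.mem_filter.mp w.2).2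

theorem outflow_eq (hc : WellFounded fun w v ↦ c w = v) (g : V → A) (v : V) :
    outflow G hc g v = g v + ∑ w ∈ G.neighborFinset v with c w = v, outflow G hc g w := by
  rw [outflow, hc.fix_eq]
  exact congrArg (g v + ·) (Finset.sum_attach _ (outflow G hc g))

end Outflow

theorem dartSum_surjective_of_wellFounded [DecidableRel G.Adj] [G.LocallyFinite] {c : V → V}
    (hadj : ∀ v, G.Adj v (c v)) (hc : WellFounded fun w v ↦ c w = v) :
    Function.Surjective (dartSum G A) := by
  classical
  intro g
  let y := outflow G hc g
  refine ⟨netFlow G fun v w ↦ if c v = w then y v else 0, funext fun v ↦ ?_⟩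
  have hsent : (∑ w ∈ G.neighborFinset v, if c v = w then y v else 0) = y v := by
    rw [Finset.sum_ite_eq, if_pos ((G.mem_neighborFinset v _).mpr (hadj v))]
  rw [dartSum_netFlow, hsent, ← Finset.sum_filter, sub_eq_iff_eq_add]
  exact outflow_eq hc g v

theorem eq_penultimate_of_adj_of_dist_lt (hG : G.IsAcyclic) {u v w : V} {p : G.Walk u v}
    (hp : p.IsPath) (hadj : G.Adj v w) (hlt : G.dist u w < G.dist u v) : w = p.penultimate := by
  classical
  obtain ⟨q, hq, hqlen⟩ := (p.reachable.trans hadj.reachable).exists_path_of_dist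
  have hv : v ∉ q.support := fun hv ↦
    (hlt.trans_le (dist_le (q.takeUntil v hv))).not_ge <|
      hqlen ▸ q.length_takeUntil_le_length hv
  exact hG.eq_penultimate_of_adj_end hp hadj
    (hG.mem_support_of_ne_mem_support_of_adj_of_isPath hp hq hadj hv)

theorem exists_adj_dist_lt (hG : G.IsAcyclic) {u v : V} [Fintype (G.neighborSet v)]
    (huv : G.Reachable u v) (hdeg : 1 < G.degree v) :
    ∃ w, G.Adj v w ∧ G.dist u v < G.dist u w := by
  obtain ⟨p, hp⟩ := huv.exists_isPath
  obtain ⟨w, hw, hne⟩ := Finset.exists_mem_ne hdeg p.penultimate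
  have hadj : G.Adj v w := (G.mem_neighborFinset v w).mp hw
  have hnlt : ¬ G.dist u w < G.dist u v := fun hlt ↦
    hne (eq_penultimate_of_adj_of_dist_lt hG hp hadj hlt)
  exact ⟨w, hadj, (not_lt.mp hnlt).lt_of_ne (hG.dist_ne_of_adj hadj huv)⟩

theorem exists_adj_wellFounded [G.LocallyFinite] (hG : G.IsAcyclic)
    (hdeg : ∀ v, 1 < G.degree v) :
    ∃ c : V → V, (∀ v, G.Adj v (c v)) ∧ WellFounded fun w v ↦ c w = v := by
  let root (v : V) : V := (G.connectedComponentMk v).out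
  have hroot (v : V) : G.Reachable (root v) v := ConnectedComponent.exact (Quot.out_eq _)
  choose c hadj hlt using fun v ↦ exists_adj_dist_lt hG (hroot v) (hdeg v)
  refine ⟨c, hadj, Subrelation.wf ?_ (measure fun v ↦ G.dist (root v) v).wf⟩
  rintro w _ rfl
  have hroot_eq : root (c w) = root w :=
    congrArg Quot.out (ConnectedComponent.connectedComponentMk_eq_of_adj (hadj w)).symm
  change G.dist (root w) w < G.dist (root (c w)) (c w)
  exact hroot_eq ▸ hlt w

theorem harmonic_cocycles_ses_general [DecidableRel G.Adj] [G.LocallyFinite]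
    (hG : G.IsAcyclic) (hdeg : ∀ v, 1 < G.degree v) :
    Function.Surjective (dartSum G A) ∧
    Function.Exact ((AddMonoidHom.ker (dartSum G A)).subtype) (dartSum G A) ∧
    Function.Injective ((AddMonoidHom.ker (dartSum G A)).subtype) := by
  obtain ⟨c, hadj, hc⟩ := exists_adj_wellFounded hG hdeg
  exact ⟨dartSum_surjective_of_wellFounded hadj hc,
    AddMonoidHom.exact_iff.mpr (AddSubgroup.range_subtype _).symm,
    AddSubgroup.subtype_injective _⟩

end

/-- Let `q ≥ 1` and let `G` be a `(q+1)`-regular tree (connected,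
acyclic, every vertex of degree `q + 1`), and let `A` be an abelian group.  Then the map
`h : F₀(E, A) → F(V, A)`, `h(f)(v) = ∑_{w ~ v} f(v,w)`, is surjective; consequently
`0 → HC(A) → F₀(E, A) → F(V, A) → 0` is exact, where `HC(A) = ker h` is the group of
`A`-valued harmonic cocycles. -/
theorem harmonic_cocycles_ses {V A : Type*} [AddCommGroup A] (q : ℕ) (hq : 1 ≤ q)
    (G : SimpleGraph V) [DecidableRel G.Adj] [G.LocallyFinite]
    (htree : G.IsTree) (hdeg : ∀ v : V, G.degree v = q + 1) :
    Function.Surjective (dartSum G A) ∧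
    Function.Exact ((AddMonoidHom.ker (dartSum G A)).subtype) (dartSum G A) ∧
    Function.Injective ((AddMonoidHom.ker (dartSum G A)).subtype) := by
  refine harmonic_cocycles_ses_general htree.isAcyclic fun v ↦ ?_
  exact (hdeg v).symm ▸ Nat.lt_succ_of_le hq
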